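/- arXiv:1503.05572 — 2 statements merged into one kernel-verified Lean document; each statement's English description precedes it below -/
import Mathlib

section
/- If p is a real polynomial of degree at most n, then sup_{x∈[0,1]} |p(x)| ≤ 2(n+1)² · ∫₀¹ |p(x)| dx. -/
/-!
Let `F` be an antiderivative of `p`, normalized to take opposite values at the endpoints of an
interval `[a, b]`. Then `|F| ≤ (∫ |p|) / 2` on `[a, b]`, and the extremality of the Chebyshev
polynomials bounds the derivative `p` of `F` at the endpoint `b`:
`|b - a| * |p b| ≤ (n + 1) ^ 2 * |∫ y in a..b, |p y||`.
A point `x` of `[a, b]` is an endpoint of both `[a, x]` and `[x, b]`, and adding the two resulting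
bounds gives the bound at `x`.
-/

open Polynomial MeasureTheory

theorem exists_derivative_eq_and_natDegree_le {K : Type*} [DivisionRing K] [CharZero K] (p : K[X]) :
    ∃ F : K[X], derivative F = p ∧ F.natDegree ≤ p.natDegree + 1 := by
  refine ⟨∑ k ∈ Finset.range (p.natDegree + 1), monomial (k + 1) (p.coeff k / (k + 1)), ?_, ?_⟩
  · have derivative_term (k : ℕ) :
        derivative (monomial (k + 1) (p.coeff k / (k + 1))) = monomial k (p.coeff k) := by
      rw [derivative_monomial, Nat.add_sub_cancel, Nat.cast_add_one,
        div_mul_cancel₀ _ (Nat.cast_add_one_ne_zero k)]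
    simp_rw [derivative_sum, derivative_term]
    exact p.as_sum_range.symm
  · refine natDegree_sum_le_of_forall_le _ _ fun k hk ↦ (natDegree_monomial_le _).trans ?_
    exact Finset.mem_range.1 hk

section EndpointMarkovInequality

variable {n : ℕ} {P : ℝ[X]} {M : ℝ}

theorem abs_eval_derivative_one_le (hdeg : P.natDegree ≤ n)
    (hbound : ∀ t ∈ Set.Icc (-1) 1, |P.eval t| ≤ M) :
    |(derivative P).eval 1| ≤ n ^ 2 * M := by
  obtain hM | hM := ((abs_nonneg _).trans (hbound 1 (by simp))).eq_or_lt
  · have hP : P = 0 := P.eq_zero_of_infinite_isRoot <|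
      (Set.Icc_infinite (by norm_num : (-1 : ℝ) < 1)).mono fun t ht ↦
        abs_nonpos_iff.1 (hM ▸ hbound t ht)
    simp [hP, ← hM]
  have eval_le (c : ℝ) (hc : |c| = M⁻¹) : c * (derivative P).eval 1 ≤ n ^ 2 := by
    have hcdeg : (C c * P).degree ≤ n :=
      degree_le_of_natDegree_le ((natDegree_C_mul_le c P).trans hdeg)
    have hcbound : ∀ t ∈ Set.Icc (-1) 1, |(C c * P).eval t| ≤ 1 := fun t ht ↦ by
      rw [eval_C_mul, abs_mul, hc, inv_mul_le_one₀ hM]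
      exact hbound t ht
    simpa [Chebyshev.derivative_T_eval_one] using
      Chebyshev.eval_iterate_derivative_le_of_forall_abs_le_one (k := 1) le_rfl hcdeg hcbound
  rw [← div_le_iff₀ hM, div_eq_inv_mul, ← abs_of_pos (inv_pos.2 hM), ← abs_mul, abs_le']
  exact ⟨eval_le _ (by simp [hM.le]), by simpa using eval_le (-M⁻¹) (by simp [hM.le])⟩

theorem abs_sub_mul_abs_eval_derivative_le {a b : ℝ} (hdeg : P.natDegree ≤ n)
    (hbound : ∀ t ∈ Set.uIcc a b, |P.eval t| ≤ M) :
    |b - a| * |(derivative P).eval b| ≤ 2 * n ^ 2 * M := by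
  let φ : ℝ[X] := C ((b - a) / 2) * X + C ((a + b) / 2)
  have hφ_one : φ.eval 1 = b := by
    simp only [φ, eval_add, eval_mul, eval_C, eval_X]
    ring
  have hφ_mem : ∀ t ∈ Set.Icc (-1) 1, φ.eval t ∈ Set.uIcc a b := fun t ht ↦ by
    rw [← segment_eq_uIcc]
    refine ⟨(1 - t) / 2, (1 + t) / 2, by linarith [ht.2], by linarith [ht.1], by ring, ?_⟩
    simp only [φ, eval_add, eval_mul, eval_C, eval_X, smul_eq_mul]
    ring
  have hcomp_deg : (P.comp φ).natDegree ≤ n := by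
    grw [natDegree_comp_le, natDegree_linear_le, mul_one, hdeg]
  have hcomp_bound : ∀ t ∈ Set.Icc (-1) 1, |(P.comp φ).eval t| ≤ M := fun t ht ↦ by
    rw [eval_comp]
    exact hbound _ (hφ_mem t ht)
  have hcomp_derivative :
      (derivative (P.comp φ)).eval 1 = (b - a) / 2 * (derivative P).eval b := by
    rw [derivative_comp, eval_mul, eval_comp, hφ_one]
    simp [φ]
  have h := abs_eval_derivative_one_le hcomp_deg hcomp_bound
  rw [hcomp_derivative, abs_mul, abs_div, abs_two] at h
  linarith

end EndpointMarkovInequality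

theorem norm_integral_sub_integral_le_abs_integral_norm {E : Type*} [NormedAddCommGroup E]
    [NormedSpace ℝ E] {μ : Measure ℝ} {f : ℝ → E} {a b s : ℝ}
    (hf : IntervalIntegrable f μ a b) (hs : s ∈ Set.uIcc a b) :
    ‖(∫ y in a..s, f y ∂μ) - ∫ y in s..b, f y ∂μ‖ ≤ |∫ y in a..b, ‖f y‖ ∂μ| := by
  wlog hab : a ≤ b generalizing a b
  · have h := this hf.symm (Set.uIcc_comm a b ▸ hs) (le_of_not_ge hab)
    rwa [intervalIntegral.integral_symm s b, intervalIntegral.integral_symm a s,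
      intervalIntegral.integral_symm a b, abs_neg, neg_sub_neg] at h
  obtain ⟨hf_left, hf_right⟩ := (IntervalIntegrable.trans_iff hs).1 hf
  rw [Set.uIcc_of_le hab] at hs
  calc ‖(∫ y in a..s, f y ∂μ) - ∫ y in s..b, f y ∂μ‖
      ≤ (∫ y in a..s, ‖f y‖ ∂μ) + ∫ y in s..b, ‖f y‖ ∂μ :=
        (norm_sub_le _ _).trans <| add_le_add
          (intervalIntegral.norm_integral_le_integral_norm hs.1)
          (intervalIntegral.norm_integral_le_integral_norm hs.2)
    _ = ∫ y in a..b, ‖f y‖ ∂μ :=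
        intervalIntegral.integral_add_adjacent_intervals hf_left.norm hf_right.norm
    _ ≤ |∫ y in a..b, ‖f y‖ ∂μ| := le_abs_self _

theorem integral_eval_derivative (F : ℝ[X]) (a b : ℝ) :
    ∫ y in a..b, (derivative F).eval y = F.eval b - F.eval a :=
  intervalIntegral.integral_eq_sub_of_hasDerivAt (fun y _ ↦ F.hasDerivAt y)
    ((derivative F).continuous.intervalIntegrable a b)

theorem abs_eval_sub_midpoint_le (F : ℝ[X]) {a b s : ℝ} (hs : s ∈ Set.uIcc a b) :
    |F.eval s - (F.eval a + F.eval b) / 2| ≤ |∫ y in a..b, (|(derivative F).eval y|)| / 2 := by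
  have h := norm_integral_sub_integral_le_abs_integral_norm
    ((derivative F).continuous.intervalIntegrable (μ := volume) a b) hs
  simp only [integral_eval_derivative, Real.norm_eq_abs] at h
  rw [show F.eval s - (F.eval a + F.eval b) / 2 =
    (F.eval s - F.eval a - (F.eval b - F.eval s)) / 2 by ring, abs_div, abs_two]
  gcongr

theorem abs_sub_mul_abs_eval_le_integral {n : ℕ} {p : ℝ[X]} (hp : p.natDegree ≤ n) (a b : ℝ) :
    |b - a| * |p.eval b| ≤ (n + 1) ^ 2 * |∫ y in a..b, (|p.eval y|)| := by
  obtain ⟨F, rfl, hF⟩ := exists_derivative_eq_and_natDegree_le p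
  let G : ℝ[X] := F - C ((F.eval a + F.eval b) / 2)
  have hG_deg : G.natDegree ≤ n + 1 := by
    rw [natDegree_sub_C]
    exact hF.trans (Nat.add_le_add_right hp 1)
  have hG_bound : ∀ t ∈ Set.uIcc a b,
      |G.eval t| ≤ |∫ y in a..b, (|(derivative F).eval y|)| / 2 := fun t ht ↦ by
    simpa only [G, eval_sub, eval_C] using abs_eval_sub_midpoint_le F ht
  have h := abs_sub_mul_abs_eval_derivative_le hG_deg hG_bound
  rw [derivative_sub, derivative_C, sub_zero, Nat.cast_add_one] at h
  linarith

theorem stmt_6_general {n : ℕ} {p : ℝ[X]} (hp : p.natDegree ≤ n) {a b x : ℝ}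
    (hx : x ∈ Set.Icc a b) :
    (b - a) * |p.eval x| ≤ (n + 1) ^ 2 * ∫ y in a..b, |p.eval y| := by
  have integrable (c d : ℝ) : IntervalIntegrable (fun y ↦ |p.eval y|) volume c d :=
    p.continuous.abs.intervalIntegrable c d
  have integral_nonneg {c d : ℝ} (h : c ≤ d) : 0 ≤ ∫ y in c..d, |p.eval y| :=
    intervalIntegral.integral_nonneg h fun _ _ ↦ abs_nonneg _
  have h_left := abs_sub_mul_abs_eval_le_integral hp a x
  rw [abs_of_nonneg (sub_nonneg.2 hx.1), abs_of_nonneg (integral_nonneg hx.1)] at h_left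
  have h_right := abs_sub_mul_abs_eval_le_integral hp b x
  rw [abs_sub_comm, abs_of_nonneg (sub_nonneg.2 hx.2), intervalIntegral.integral_symm, abs_neg,
    abs_of_nonneg (integral_nonneg hx.2)] at h_right
  calc (b - a) * |p.eval x| = (x - a) * |p.eval x| + (b - x) * |p.eval x| := by ring
    _ ≤ (n + 1) ^ 2 * (∫ y in a..x, |p.eval y|) + (n + 1) ^ 2 * ∫ y in x..b, |p.eval y| :=
      add_le_add h_left h_right
    _ = (n + 1) ^ 2 * ∫ y in a..b, |p.eval y| := by
      rw [← mul_add, intervalIntegral.integral_add_adjacent_intervals (integrable a x)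
        (integrable x b)]

theorem stmt_6 (n : ℕ) (p : Polynomial ℝ) (hp : p.natDegree ≤ n) :
    ∀ x ∈ Set.Icc (0:ℝ) 1,
      |p.eval x| ≤ 2 * (n + 1) ^ 2 * ∫ y in (0:ℝ)..1, |p.eval y| := by
  intro x hx
  linarith [stmt_6_general hp hx, abs_nonneg (p.eval x)]
end

section
/- Let f be a continuous function on [0,1] and let p be a polynomial of degree at most n with ‖p‖₁ ≤ 2‖f‖₁ that is a (ζ/(20(n+2)²))-nearly best approximation to f among such polynomials. Then there exist n+1 points r₁ < r₂ < ⋯ < r_{n+1} in [0,1] with r_{i+1} − r_i ≥ 1/(20(n+2)²n) for each i, and |f(r_i) − p(r_i)| ≤ ζ for each i. -/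
/-!
If `g = f - p` is at most `ζ` in absolute value only within distance `δ` of at most `n` points, then
off these neighbourhoods `g` has at most `n` sign changes, and some polynomial `q ≠ 0` of degree at
most `n` has the sign of `g` there. Scale `q` so that `max |q| = ζ`. Replacing `p` by `p + q`
decreases `∫ |f - p|` by at least `∫ |q| - 4 n δ ζ`, and Markov's inequality for the antiderivative
of `q` gives `∫ |q| ≥ ζ (b - a) / (4 (n + 1)²)`, so `p` is not nearly best. Otherwise the set where
`|g| ≤ ζ` contains `n + 1` points at mutual distance at least `δ`.

A polynomial `q` with `∫ |q| > 2 ∫ |f|` approximates `f` worse than `0` does, so `p` is nearly best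
among all polynomials of degree at most `n`.
-/

open Polynomial MeasureTheory Set Metric

lemma exists_mem_Icc_eval_ne_zero {h : ℝ[X]} (h0 : h ≠ 0) {a b : ℝ} (hab : a < b) :
    ∃ x ∈ Icc a b, h.eval x ≠ 0 := by
  by_contra! hzero
  exact h0 (eq_zero_of_infinite_isRoot h ((Icc_infinite hab).mono hzero))

lemma eval_one_derivative_le_sq {P : ℝ[X]} {n : ℕ} (hP : P.natDegree ≤ n)
    (hbound : ∀ x ∈ Icc (-1 : ℝ) 1, |P.eval x| ≤ 1) : (derivative P).eval 1 ≤ (n : ℝ) ^ 2 := by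
  have hT : (derivative (Chebyshev.T ℝ n)).eval 1 = (n : ℝ) ^ 2 := by
    simpa using Chebyshev.iterate_derivative_T_eval_one (R := ℝ) n 1
  simpa [hT] using Chebyshev.eval_iterate_derivative_le_of_forall_abs_le_one (k := 1) le_rfl
    (degree_le_of_natDegree_le hP) hbound

lemma abs_eval_one_derivative_le {P : ℝ[X]} {n : ℕ} {K : ℝ} (hP : P.natDegree ≤ n)
    (hbound : ∀ x ∈ Icc (-1 : ℝ) 1, |P.eval x| ≤ K) :
    |(derivative P).eval 1| ≤ (n : ℝ) ^ 2 * K := by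
  have hK : 0 ≤ K := (abs_nonneg _).trans (hbound 1 (by simp))
  obtain rfl | hKpos := hK.eq_or_lt
  · have hP0 : P = 0 := by
      by_contra hP0
      obtain ⟨x, hx, hPx⟩ := exists_mem_Icc_eval_ne_zero hP0 (show (-1 : ℝ) < 1 by norm_num)
      exact hPx (abs_nonpos_iff.mp (hbound x hx))
    simp [hP0]
  have hscaled : ∀ c : ℝ, |c| = K⁻¹ → c * (derivative P).eval 1 ≤ (n : ℝ) ^ 2 := fun c hc ↦ by
    have := eval_one_derivative_le_sq (P := C c * P) ((natDegree_C_mul_le _ _).trans hP)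
      fun x hx ↦ by
        rw [eval_C_mul, abs_mul, hc, inv_mul_le_iff₀ hKpos, mul_one]
        exact hbound x hx
    simpa using this
  have hupper := hscaled K⁻¹ (abs_of_pos (inv_pos.mpr hKpos))
  have hlower := hscaled (-K⁻¹) (by rw [abs_neg, abs_of_pos (inv_pos.mpr hKpos)])
  rw [neg_mul, ← mul_neg, inv_mul_le_iff₀' hKpos] at hlower
  rw [inv_mul_le_iff₀' hKpos] at hupper
  exact abs_le'.mpr ⟨hupper, hlower⟩

lemma abs_sub_mul_abs_eval_derivative_le_s7 {P : ℝ[X]} {n : ℕ} {K u v : ℝ} (hP : P.natDegree ≤ n)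
    (hbound : ∀ x ∈ uIcc u v, |P.eval x| ≤ K) :
    |v - u| * |(derivative P).eval v| ≤ 2 * (n : ℝ) ^ 2 * K := by
  set φ : ℝ[X] := C ((v - u) / 2) * X + C ((u + v) / 2) with hφ
  have hdeg : (P.comp φ).natDegree ≤ n :=
    calc (P.comp φ).natDegree ≤ P.natDegree * φ.natDegree := natDegree_comp_le
      _ ≤ n * 1 := Nat.mul_le_mul hP natDegree_linear_le
      _ = n := mul_one n
  have hmaps : ∀ y ∈ Icc (-1 : ℝ) 1, φ.eval y ∈ uIcc u v := fun y hy ↦ by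
    rw [← segment_eq_uIcc]
    refine ⟨(1 - y) / 2, (1 + y) / 2, by linarith [hy.2], by linarith [hy.1], by ring, ?_⟩
    simp only [hφ, eval_add, eval_mul, eval_C, eval_X, smul_eq_mul]
    ring
  have hφ1 : φ.eval 1 = v := by
    simp only [hφ, eval_add, eval_mul, eval_C, eval_X]
    ring
  have hderiv : (derivative (P.comp φ)).eval 1 = (v - u) / 2 * (derivative P).eval v := by
    rw [derivative_comp, eval_mul, eval_comp, hφ1]
    simp [hφ]
  have hmarkov := abs_eval_one_derivative_le hdeg fun y hy ↦ by
    rw [eval_comp]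
    exact hbound _ (hmaps y hy)
  rw [hderiv, abs_mul, abs_div, abs_two] at hmarkov
  linarith

lemma exists_derivative_eq {k : Type*} [Field k] [CharZero k] (h : k[X]) :
    ∃ H : k[X], derivative H = h ∧ H.natDegree ≤ h.natDegree + 1 := by
  refine ⟨∑ i ∈ Finset.range (h.natDegree + 1), C (h.coeff i / (i + 1)) * X ^ (i + 1), ?_, ?_⟩
  · rw [derivative_sum]
    conv_rhs => rw [h.as_sum_range_C_mul_X_pow]
    refine Finset.sum_congr rfl fun i _ ↦ ?_
    have hi : (i : k) + 1 ≠ 0 := Nat.cast_add_one_ne_zero i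
    rw [derivative_C_mul_X_pow, Nat.cast_add_one, div_mul_cancel₀ _ hi, Nat.add_sub_cancel]
  · exact natDegree_sum_le_of_forall_le _ _ fun i hi ↦
      (natDegree_C_mul_X_pow_le _ _).trans (Finset.mem_range.mp hi)

lemma exists_derivative_eq_abs_eval_le_integral (h : ℝ[X]) (a b : ℝ) :
    ∃ H : ℝ[X], derivative H = h ∧ H.natDegree ≤ h.natDegree + 1 ∧
      ∀ x ∈ Icc a b, |H.eval x| ≤ ∫ y in a..b, |h.eval y| := by
  obtain ⟨H, rfl, hdeg⟩ := exists_derivative_eq h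
  refine ⟨H - C (H.eval a), by simp, by rwa [natDegree_sub_C], fun x hx ↦ ?_⟩
  have hFTC : ∫ y in a..x, (derivative H).eval y = H.eval x - H.eval a :=
    intervalIntegral.integral_eq_sub_of_hasDerivAt (fun y _ ↦ H.hasDerivAt y)
      ((derivative H).continuous.intervalIntegrable _ _)
  calc |(H - C (H.eval a)).eval x| = |∫ y in a..x, (derivative H).eval y| := by
        rw [hFTC, eval_sub, eval_C]
    _ ≤ ∫ y in a..x, |(derivative H).eval y| := intervalIntegral.abs_integral_le_integral_abs hx.1
    _ ≤ ∫ y in a..b, |(derivative H).eval y| :=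
        intervalIntegral.integral_mono_interval le_rfl hx.1 hx.2
          (Filter.Eventually.of_forall fun _ ↦ abs_nonneg _)
          ((derivative H).continuous.abs.intervalIntegrable _ _)

lemma sub_mul_abs_eval_le_integral_abs {h : ℝ[X]} {n : ℕ} {a b x : ℝ} (hh : h.natDegree ≤ n)
    (hx : x ∈ Icc a b) :
    (b - a) * |h.eval x| ≤ 4 * ((n : ℝ) + 1) ^ 2 * ∫ y in a..b, |h.eval y| := by
  obtain ⟨H, rfl, hdeg, hbound⟩ := exists_derivative_eq_abs_eval_le_integral h a b
  obtain ⟨u, hu, hux⟩ : ∃ u ∈ Icc a b, (b - a) / 2 ≤ |x - u| := by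
    rcases le_total ((a + b) / 2) x with hmid | hmid
    · exact ⟨a, left_mem_Icc.mpr (hx.1.trans hx.2), by linarith [le_abs_self (x - a)]⟩
    · exact ⟨b, right_mem_Icc.mpr (hx.1.trans hx.2), by linarith [neg_le_abs (x - b)]⟩
  have hmarkov := abs_sub_mul_abs_eval_derivative_le_s7 (hdeg.trans (Nat.succ_le_succ hh))
    fun y hy ↦ hbound y (uIcc_subset_Icc hu hx hy)
  push_cast at hmarkov
  linarith [mul_le_mul_of_nonneg_right hux (abs_nonneg ((derivative H).eval x))]

lemma forall_nonneg_or_forall_nonpos_of_ne_zero {α : Type*} [TopologicalSpace α] {J : Set α}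
    {g : α → ℝ} (hJ : IsPreconnected J) (hg : ContinuousOn g J) (hne : ∀ x ∈ J, g x ≠ 0) :
    (∀ x ∈ J, 0 ≤ g x) ∨ ∀ x ∈ J, g x ≤ 0 :=
  (hJ.mapsTo_Ioi_or_Iio hg hne).imp (fun h _ hx ↦ (h hx).le) (fun h _ hx ↦ (h hx).le)

lemma exists_prod_sub_mul_nonneg_union {g : ℝ → ℝ} {c m : ℝ} {T : Finset ℝ} {J K : Set ℝ}
    (hc : c ≠ 0) (hT : ∀ t ∈ T, t < m) (hJ : ∀ x ∈ J, x ≤ m) (hK : ∀ x ∈ K, m ≤ x)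
    (hsignJ : ∀ x ∈ J, 0 ≤ g x * (c * ∏ t ∈ T, (x - t)))
    (hsignK : (∀ x ∈ K, 0 ≤ g x * c) ∨ ∀ x ∈ K, g x * c ≤ 0) :
    ∃ T' ⊆ insert m T, ∃ c' : ℝ, c' ≠ 0 ∧
      ∀ x ∈ J ∪ K, 0 ≤ g x * (c' * ∏ t ∈ T', (x - t)) := by
  have hprod : ∀ x ∈ K, 0 ≤ ∏ t ∈ T, (x - t) := fun x hx ↦
    Finset.prod_nonneg fun t ht ↦ by linarith [hT t ht, hK x hx]
  rcases hsignK with hsame | hopposite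
  · refine ⟨T, Finset.subset_insert m T, c, hc, fun x hx ↦ hx.elim (hsignJ x) fun hxK ↦ ?_⟩
    rw [← mul_assoc]
    exact mul_nonneg (hsame x hxK) (hprod x hxK)
  · have hmT : m ∉ T := fun hm ↦ (hT m hm).false
    have hswap : ∀ x, g x * (-c * ∏ t ∈ insert m T, (x - t)) =
        g x * (c * ∏ t ∈ T, (x - t)) * (m - x) := fun x ↦ by
      rw [Finset.prod_insert hmT]
      ring
    refine ⟨insert m T, subset_rfl, -c, neg_ne_zero.mpr hc, fun x hx ↦ ?_⟩
    rw [hswap]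
    rcases hx with hxJ | hxK
    · exact mul_nonneg (hsignJ x hxJ) (sub_nonneg.mpr (hJ x hxJ))
    · rw [← mul_assoc]
      exact mul_nonneg_of_nonpos_of_nonpos
        (mul_nonpos_of_nonpos_of_nonneg (hopposite x hxK) (hprod x hxK))
        (sub_nonpos.mpr (hK x hxK))

lemma exists_prod_sub_mul_nonneg {g : ℝ → ℝ} {δ : ℝ} (hδ : 0 ≤ δ) (S : Finset ℝ) {I : Set ℝ}
    (hI : I.OrdConnected) (hg : ContinuousOn g I)
    (hne : ∀ x ∈ I, x ∉ ⋃ s ∈ S, ball s δ → g x ≠ 0) :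
    ∃ T ⊆ S, ∃ c : ℝ, c ≠ 0 ∧
      ∀ x ∈ I, x ∉ ⋃ s ∈ S, ball s δ → 0 ≤ g x * (c * ∏ t ∈ T, (x - t)) := by
  induction S using Finset.induction_on_max generalizing I with
  | empty =>
    have hgI : ∀ x ∈ I, g x ≠ 0 := fun x hx ↦ hne x hx (by simp)
    rcases forall_nonneg_or_forall_nonpos_of_ne_zero hI.isPreconnected hg hgI with h | h
    · exact ⟨∅, subset_rfl, 1, one_ne_zero, fun x hx _ ↦ by simpa using h x hx⟩
    · exact ⟨∅, subset_rfl, -1, by simp, fun x hx _ ↦ by simpa using h x hx⟩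
  | insert m S hm ih =>
    have hcover : ∀ x, x ∉ ⋃ s ∈ insert m S, ball s δ ↔
        (x ≤ m - δ ∨ m + δ ≤ x) ∧ x ∉ ⋃ s ∈ S, ball s δ := fun x ↦ by
      have hball : x ∉ ball m δ ↔ x ≤ m - δ ∨ m + δ ≤ x := by
        rw [mem_ball, not_lt, Real.dist_eq, le_abs', sub_le_iff_le_add', le_sub_iff_add_le',
          ← sub_eq_add_neg]
      rw [Finset.set_biUnion_insert, mem_union, not_or, hball]
    have hbeyond : ∀ x, m + δ ≤ x → x ∉ ⋃ s ∈ S, ball s δ := fun x hx ↦ by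
      simp only [mem_iUnion, mem_ball, Real.dist_eq, exists_prop, not_exists, not_and, not_lt]
      intro s hs
      linarith [le_abs_self (x - s), hm s hs]
    obtain ⟨T, hTS, c, hc, hsign⟩ := ih (I := I ∩ Iic (m - δ)) (hI.inter ordConnected_Iic)
      (hg.mono inter_subset_left) fun x hx hxS ↦ hne x hx.1 ((hcover x).mpr ⟨.inl hx.2, hxS⟩)
    have hbeyond_sign := forall_nonneg_or_forall_nonpos_of_ne_zero
      (hI.inter (ordConnected_Ici (a := m + δ))).isPreconnected
      ((hg.mono inter_subset_left).mul continuousOn_const) fun x hx ↦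
        mul_ne_zero (hne x hx.1 ((hcover x).mpr ⟨.inr hx.2, hbeyond x hx.2⟩)) hc
    obtain ⟨T', hT', c', hc', hsign'⟩ := exists_prod_sub_mul_nonneg_union
      (J := (I ∩ Iic (m - δ)) \ ⋃ s ∈ S, ball s δ) hc (fun t ht ↦ hm t (hTS ht))
      (fun x hx ↦ hx.1.2.trans (sub_le_self m hδ))
      (fun x hx ↦ (le_add_of_nonneg_right hδ).trans hx.2) (fun x hx ↦ hsign x hx.1 hx.2)
      hbeyond_sign
    refine ⟨T', hT'.trans (Finset.insert_subset_insert m hTS), c', hc', fun x hx hxS ↦ ?_⟩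
    obtain ⟨hside, hxS⟩ := (hcover x).mp hxS
    exact hsign' x (hside.imp (fun hle ↦ ⟨⟨hx, hle⟩, hxS⟩) fun hge ↦ ⟨hx, hge⟩)

lemma exists_polynomial_mul_eval_nonneg {g : ℝ → ℝ} {δ : ℝ} (hδ : 0 ≤ δ) (S : Finset ℝ) {I : Set ℝ}
    (hI : I.OrdConnected) (hg : ContinuousOn g I)
    (hne : ∀ x ∈ I, x ∉ ⋃ s ∈ S, ball s δ → g x ≠ 0) :
    ∃ h : ℝ[X], h ≠ 0 ∧ h.natDegree ≤ S.card ∧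
      ∀ x ∈ I, x ∉ ⋃ s ∈ S, ball s δ → 0 ≤ g x * h.eval x := by
  obtain ⟨T, hTS, c, hc, hsign⟩ := exists_prod_sub_mul_nonneg hδ S hI hg hne
  refine ⟨C c * ∏ t ∈ T, (X - C t), ?_, ?_, fun x hx hxS ↦ ?_⟩
  · exact mul_ne_zero (C_ne_zero.mpr hc) (Finset.prod_ne_zero_iff.mpr fun t _ ↦ X_sub_C_ne_zero t)
  · rw [natDegree_C_mul hc, natDegree_finsetProd_X_sub_C_eq_card]
    exact Finset.card_le_card hTS
  · simpa [eval_prod] using hsign x hx hxS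

lemma exists_separated_or_cover {α : Type*} [PseudoMetricSpace α] (Z : Set α) {δ : ℝ} (hδ : 0 < δ)
    (k : ℕ) :
    (∃ S : Finset α, ↑S ⊆ Z ∧ S.card = k ∧ (S : Set α).Pairwise fun x y ↦ δ ≤ dist x y) ∨
      ∃ S : Finset α, S.card < k ∧ Z ⊆ ⋃ s ∈ S, ball s δ := by
  classical
  induction k with
  | zero => exact .inl ⟨∅, by simp⟩
  | succ k ih =>
    rcases ih with ⟨S, hSZ, hcard, hsep⟩ | ⟨S, hcard, hcover⟩
    · by_cases hcover : Z ⊆ ⋃ s ∈ S, ball s δ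
      · exact .inr ⟨S, by lia, hcover⟩
      obtain ⟨x, hxZ, hx⟩ := not_subset.mp hcover
      have hfar : ∀ s ∈ S, δ ≤ dist x s := by simpa using hx
      have hxS : x ∉ S := fun hxS ↦ hδ.not_ge (by simpa using hfar x hxS)
      refine .inl ⟨insert x S, ?_, by rw [Finset.card_insert_of_notMem hxS, hcard], ?_⟩
      · rw [Finset.coe_insert]
        exact insert_subset hxZ hSZ
      · rw [Finset.coe_insert]
        exact hsep.insert_of_notMem hxS fun s hs ↦ ⟨hfar s hs, dist_comm x s ▸ hfar s hs⟩
    · exact .inr ⟨S, by lia, hcover⟩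

lemma exists_strictMono_of_pairwise_le_dist {S : Finset ℝ} {n : ℕ} {δ : ℝ} (hcard : S.card = n + 1)
    (hsep : (S : Set ℝ).Pairwise fun x y ↦ δ ≤ dist x y) :
    ∃ r : Fin (n + 1) → ℝ, StrictMono r ∧ (∀ i, r i ∈ S) ∧
      ∀ i : Fin n, δ ≤ r i.succ - r i.castSucc := by
  have hmono := (S.orderEmbOfFin hcard).strictMono
  have hmem := S.orderEmbOfFin_mem hcard
  refine ⟨S.orderEmbOfFin hcard, hmono, hmem, fun i ↦ ?_⟩
  have hlt := hmono i.castSucc_lt_succ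
  calc δ ≤ dist (S.orderEmbOfFin hcard i.succ) (S.orderEmbOfFin hcard i.castSucc) :=
        hsep (hmem _) (hmem _) hlt.ne'
    _ = _ := by rw [Real.dist_eq, abs_of_pos (sub_pos.mpr hlt)]

lemma volume_real_biUnion_ball_le (S : Finset ℝ) {δ : ℝ} (hδ : 0 ≤ δ) :
    volume.real (⋃ s ∈ S, ball s δ) ≤ S.card * (2 * δ) :=
  calc volume.real (⋃ s ∈ S, ball s δ) ≤ ∑ s ∈ S, volume.real (ball s δ) :=
        measureReal_biUnion_finset_le S _
    _ = S.card * (2 * δ) := by simp [Real.volume_real_ball hδ]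

lemma abs_sub_eq_of_abs_le_of_mul_nonneg {x y : ℝ} (hle : |y| ≤ |x|) (hsign : 0 ≤ x * y) :
    |x - y| = |x| - |y| := by
  have hsq : (x - y) ^ 2 = (|x| - |y|) ^ 2 := by
    rw [sub_sq, sub_sq, sq_abs, sq_abs, mul_assoc 2 |x|, ← abs_mul, abs_of_nonneg hsign, mul_assoc]
  rwa [sq_eq_sq_iff_abs_eq_abs, abs_of_nonneg (sub_nonneg.mpr hle)] at hsq

lemma integral_abs_sub_le_of_mul_nonneg {α : Type*} [MeasurableSpace α] {μ : Measure α}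
    {g q : α → ℝ} {A : Set α} (hg : Integrable g μ) (hq : Integrable q μ) (hA : MeasurableSet A)
    (hsign : ∀ᵐ x ∂μ, x ∉ A → |q x| ≤ |g x| ∧ 0 ≤ g x * q x) :
    ∫ x, |g x - q x| ∂μ ≤ ∫ x, |g x| ∂μ - ∫ x, |q x| ∂μ + 2 * ∫ x in A, |q x| ∂μ := by
  have hqA : Integrable (A.indicator fun x ↦ |q x|) μ := hq.abs.indicator hA
  have hdiff : Integrable (fun x ↦ |g x| - |q x|) μ := hg.abs.sub hq.abs
  rw [← integral_indicator hA, ← integral_const_mul, ← integral_sub hg.abs hq.abs,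
    ← integral_add hdiff (hqA.const_mul 2)]
  refine integral_mono_ae (hg.sub hq).abs (hdiff.add (hqA.const_mul 2)) ?_
  filter_upwards [hsign] with x hx
  by_cases hxA : x ∈ A
  · simp only [indicator_of_mem hxA]
    linarith [abs_sub (g x) (q x)]
  · simp only [indicator_of_notMem hxA]
    linarith [abs_sub_eq_of_abs_le_of_mul_nonneg (hx hxA).1 (hx hxA).2]

lemma exists_C_mul_abs_eval_le {h : ℝ[X]} (h0 : h ≠ 0) {a b ζ : ℝ} (hab : a < b) (hζ : 0 < ζ) :
    ∃ c > 0, (∀ x ∈ Icc a b, |(C c * h).eval x| ≤ ζ) ∧ ∃ x ∈ Icc a b, |(C c * h).eval x| = ζ := by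
  obtain ⟨x₀, hx₀, hmax⟩ := isCompact_Icc.exists_isMaxOn (nonempty_Icc.mpr hab.le)
    h.continuous.abs.continuousOn
  have hpos : 0 < |h.eval x₀| := by
    obtain ⟨x, hx, hne⟩ := exists_mem_Icc_eval_ne_zero h0 hab
    exact (abs_pos.mpr hne).trans_le (hmax hx)
  have hc : 0 < ζ / |h.eval x₀| := div_pos hζ hpos
  have heval : ∀ x, |(C (ζ / |h.eval x₀|) * h).eval x| = ζ / |h.eval x₀| * |h.eval x| := fun x ↦ by
    rw [eval_C_mul, abs_mul, abs_of_pos hc]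
  refine ⟨ζ / |h.eval x₀|, hc, fun x hx ↦ ?_, x₀, hx₀, ?_⟩
  · calc _ = ζ / |h.eval x₀| * |h.eval x| := heval x
      _ ≤ ζ / |h.eval x₀| * |h.eval x₀| := mul_le_mul_of_nonneg_left (hmax hx) hc.le
      _ = ζ := div_mul_cancel₀ ζ hpos.ne'
  · rw [heval, div_mul_cancel₀ ζ hpos.ne']

lemma exists_integral_abs_sub_eval_le {g : ℝ → ℝ} {h : ℝ[X]} {n : ℕ} {a b ζ : ℝ} {A : Set ℝ}
    (hab : a < b) (hζ : 0 < ζ) (hg : ContinuousOn g (Icc a b)) (h0 : h ≠ 0) (hh : h.natDegree ≤ n)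
    (hA : MeasurableSet A) (hAfin : volume A ≠ ⊤)
    (hsign : ∀ x ∈ Icc a b, x ∉ A → ζ ≤ |g x| ∧ 0 ≤ g x * h.eval x) :
    ∃ q : ℝ[X], q.natDegree ≤ n ∧
      (∫ x in a..b, |g x - q.eval x|) + ζ * (b - a) / (4 * ((n : ℝ) + 1) ^ 2) ≤
        (∫ x in a..b, |g x|) + 2 * ζ * volume.real A := by
  obtain ⟨c, hc, hle, x₀, hx₀, hmax⟩ := exists_C_mul_abs_eval_le h0 hab hζ
  set q := C c * h with hq
  have hqdeg : q.natDegree ≤ n := (natDegree_C_mul_le c h).trans hh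
  refine ⟨q, hqdeg, ?_⟩
  have hlower : ζ * (b - a) / (4 * ((n : ℝ) + 1) ^ 2) ≤ ∫ x in a..b, |q.eval x| := by
    rw [div_le_iff₀' (by positivity), mul_comm ζ, ← hmax]
    exact sub_mul_abs_eval_le_integral_abs hqdeg hx₀
  have hqsign : ∀ᵐ x ∂volume.restrict (Ioc a b),
      x ∉ A → |q.eval x| ≤ |g x| ∧ 0 ≤ g x * q.eval x := by
    filter_upwards [ae_restrict_mem measurableSet_Ioc] with x hx hxA
    obtain ⟨hgx, hgh⟩ := hsign x (Ioc_subset_Icc_self hx) hxA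
    refine ⟨(hle x (Ioc_subset_Icc_self hx)).trans hgx, ?_⟩
    rw [hq, eval_C_mul, mul_left_comm]
    exact mul_nonneg hc.le hgh
  have hupper := integral_abs_sub_le_of_mul_nonneg
    ((hg.integrableOn_Icc).mono_set Ioc_subset_Icc_self)
    (q.continuous.integrableOn_Ioc) hA hqsign
  have hsmall : ∫ x in A, |q.eval x| ∂(volume.restrict (Ioc a b)) ≤ ζ * volume.real A :=
    calc _ = ∫ x in A ∩ Ioc a b, |q.eval x| := by rw [Measure.restrict_restrict hA]
      _ ≤ ζ * volume.real (A ∩ Ioc a b) := (Real.le_norm_self _).trans <|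
          norm_setIntegral_le_of_norm_le_const (measure_inter_lt_top_of_left_ne_top hAfin)
            fun x hx ↦ by simpa using hle x (Ioc_subset_Icc_self hx.2)
      _ ≤ ζ * volume.real A := mul_le_mul_of_nonneg_left
          (measureReal_mono inter_subset_left hAfin) hζ.le
  simp only [intervalIntegral.integral_of_le hab.le] at hlower ⊢
  linarith

lemma integral_abs_sub_eval_lt_of_forall_integral_abs_le {f : ℝ → ℝ} {p q : ℝ[X]}
    {n : ℕ} {a b ε : ℝ} (hab : a ≤ b) (hf : ContinuousOn f (Icc a b))
    (hnear : ∀ q : ℝ[X], q.natDegree ≤ n →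
      (∫ x in a..b, |q.eval x|) ≤ 2 * (∫ x in a..b, |f x|) →
      (∫ x in a..b, |f x - p.eval x|) < (∫ x in a..b, |f x - q.eval x|) + ε)
    (hq : q.natDegree ≤ n) :
    (∫ x in a..b, |f x - p.eval x|) < (∫ x in a..b, |f x - q.eval x|) + ε := by
  by_cases hqf : (∫ x in a..b, |q.eval x|) ≤ 2 * ∫ x in a..b, |f x|
  · exact hnear q hq hqf
  have hfint : IntervalIntegrable (fun x ↦ |f x|) volume a b :=
    hf.abs.intervalIntegrable_of_Icc hab
  have hfqint : IntervalIntegrable (fun x ↦ |f x - q.eval x|) volume a b :=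
    (hf.sub q.continuous.continuousOn).abs.intervalIntegrable_of_Icc hab
  have hzero : (∫ x in a..b, |f x - p.eval x|) < (∫ x in a..b, |f x|) + ε := by
    simpa using hnear 0 (by simp) (by
      simpa using intervalIntegral.integral_nonneg hab fun x _ ↦ abs_nonneg (f x))
  have htriangle : (∫ x in a..b, |q.eval x|) ≤
      (∫ x in a..b, |f x|) + ∫ x in a..b, |f x - q.eval x| := by
    rw [← intervalIntegral.integral_add hfint hfqint]
    refine intervalIntegral.integral_mono_on hab (q.continuous.abs.intervalIntegrable a b)
      (hfint.add hfqint) fun x _ ↦ ?_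
    simpa using abs_sub (f x) (f x - q.eval x)
  linarith

theorem stmt_7_general {f : ℝ → ℝ} {p : ℝ[X]} {n : ℕ} {a b δ ε ζ : ℝ} (hab : a < b)
    (hf : ContinuousOn f (Icc a b)) (hδ : 0 < δ) (hζ : 0 < ζ)
    (hε : ε + 4 * n * δ * ζ ≤ ζ * (b - a) / (4 * ((n : ℝ) + 1) ^ 2)) (hp : p.natDegree ≤ n)
    (hnear : ∀ q : ℝ[X], q.natDegree ≤ n →
      (∫ x in a..b, |q.eval x|) ≤ 2 * (∫ x in a..b, |f x|) →
      (∫ x in a..b, |f x - p.eval x|) < (∫ x in a..b, |f x - q.eval x|) + ε) :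
    ∃ r : Fin (n + 1) → ℝ, StrictMono r ∧ (∀ i, r i ∈ Icc a b) ∧
      (∀ i : Fin n, r i.succ - r i.castSucc ≥ δ) ∧ ∀ i, |f (r i) - p.eval (r i)| ≤ ζ := by
  set g : ℝ → ℝ := fun x ↦ f x - p.eval x
  have hg : ContinuousOn g (Icc a b) := hf.sub p.continuous.continuousOn
  rcases exists_separated_or_cover {x ∈ Icc a b | |g x| ≤ ζ} hδ (n + 1) with
    ⟨S, hSsub, hcard, hsep⟩ | ⟨S, hcard, hcover⟩
  · obtain ⟨r, hmono, hrS, hgap⟩ := exists_strictMono_of_pairwise_le_dist hcard hsep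
    exact ⟨r, hmono, fun i ↦ (hSsub (hrS i)).1, hgap, fun i ↦ (hSsub (hrS i)).2⟩
  set A := ⋃ s ∈ S, ball s δ
  have hlarge : ∀ x ∈ Icc a b, x ∉ A → ζ < |g x| := fun x hx hxA ↦
    not_le.mp fun hle ↦ hxA (hcover ⟨hx, hle⟩)
  obtain ⟨h, h0, hhS, hsign⟩ := exists_polynomial_mul_eval_nonneg hδ.le S ordConnected_Icc hg
    fun x hx hxA ↦ abs_pos.mp (hζ.trans (hlarge x hx hxA))
  obtain ⟨q, hq, himprove⟩ := exists_integral_abs_sub_eval_le hab hζ hg h0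
    (hhS.trans (Nat.lt_succ_iff.mp hcard)) (S.measurableSet_biUnion fun s _ ↦ measurableSet_ball)
    (measure_biUnion_lt_top S.finite_toSet fun s _ ↦ measure_ball_lt_top).ne
    fun x hx hxA ↦ ⟨(hlarge x hx hxA).le, hsign x hx hxA⟩
  have hnear_add := integral_abs_sub_eval_lt_of_forall_integral_abs_le hab.le hf hnear
    (natDegree_add_le_of_degree_le hp hq)
  simp only [eval_add, ← sub_sub] at hnear_add
  have hvolume : 2 * ζ * volume.real A ≤ 4 * n * δ * ζ :=
    calc 2 * ζ * volume.real A ≤ 2 * ζ * (n * (2 * δ)) := by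
          gcongr
          exact (volume_real_biUnion_ball_le S hδ.le).trans
            (by gcongr; exact Nat.lt_succ_iff.mp hcard)
      _ = 4 * n * δ * ζ := by ring
  linarith

theorem stmt_7 (f : ℝ → ℝ) (n : ℕ) (ζ : ℝ)
    (hf : ContinuousOn f (Set.Icc 0 1)) (hn : 1 ≤ n) (hζ : 0 < ζ)
    (p : Polynomial ℝ) (hp : p.natDegree ≤ n)
    (hpQ : (∫ x in (0:ℝ)..1, |p.eval x|) ≤ 2 * ∫ x in (0:ℝ)..1, |f x|)
    (hnear : ∀ q : Polynomial ℝ, q.natDegree ≤ n →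
      (∫ x in (0:ℝ)..1, |q.eval x|) ≤ 2 * (∫ x in (0:ℝ)..1, |f x|) →
      (∫ x in (0:ℝ)..1, |f x - p.eval x|) <
        (∫ x in (0:ℝ)..1, |f x - q.eval x|) + ζ / (20 * (n + 2) ^ 2)) :
    ∃ r : Fin (n + 1) → ℝ, StrictMono r ∧ (∀ i, r i ∈ Set.Icc (0:ℝ) 1) ∧
      (∀ i : Fin n, r i.succ - r i.castSucc ≥ 1 / (20 * (n + 2) ^ 2 * n)) ∧
      (∀ i, |f (r i) - p.eval (r i)| ≤ ζ) := by
  have : (0 : ℝ) < n := Nat.cast_pos.mpr hn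
  refine stmt_7_general zero_lt_one hf (by positivity) hζ ?_ hp hnear
  calc ζ / (20 * ((n : ℝ) + 2) ^ 2) + 4 * n * (1 / (20 * (n + 2) ^ 2 * n)) * ζ
      = ζ * (1 - 0) / (4 * (n + 2) ^ 2) := by field_simp; ring
    _ ≤ ζ * (1 - 0) / (4 * (n + 1) ^ 2) := by gcongr; norm_num
end
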